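/- Fix f : ℕ. Let V be a type of blocks with functions author : V → Fin (2*f+1), round : V → ℕ, and a relation P : V → V → Prop (P a b means block b references block a). Assume: (i) per-round uniqueness: any two blocks with the same author and the same round are equal; (ii) references point backwards: P a b implies round a < round b; (iii) quorum references: every block b with round b ≥ 1 admits a finset S of blocks with S.card ≥ f+1 such that every s ∈ S satisfies round s = round b − 1 and P s b. Suppose a block B with round B = R is directly committed, i.e., there is a finset W of blocks with W.card ≥ f+1 such that every w ∈ W satisfies round w = R+1 and P B w. Then there is no block A with round A ≥ R+2 that lacks a path to B; that is, every block A with round A ≥ R+2 satisfies Relation.TransGen P B A. -/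

import Mathlib

/-!
Two quorums of the same round whose sizes add up to more than the number of replicas share a block.
Hence every block two rounds above `B` references a block that references `B`, and a block of a
later round reaches that round by following references down one round at a time.
-/

section Quorum

variable {V ι : Type*} [Fintype ι]

theorem card_le_card_fintype_of_injOn {g : V → ι} {S : Finset V} (hg : Set.InjOn g S) :
    S.card ≤ Fintype.card ι :=
  Finset.card_le_card_of_injOn g (fun _ _ ↦ Finset.mem_univ _) hg

theorem exists_mem_mem_of_injOn_of_card_lt {g : V → ι} {C : Set V} (hg : C.InjOn g)
    {S T : Finset V} (hS : ↑S ⊆ C) (hT : ↑T ⊆ C) (hcard : Fintype.card ι < S.card + T.card) :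
    ∃ x ∈ S, x ∈ T := by
  classical
  have hunion : (S ∪ T).card ≤ Fintype.card ι :=
    card_le_card_fintype_of_injOn <| hg.mono <| by
      rw [Finset.coe_union]
      exact Set.union_subset hS hT
  obtain ⟨x, hx⟩ := Finset.inter_nonempty_of_card_lt_card_add_card
    Finset.subset_union_left Finset.subset_union_right (hunion.trans_lt hcard)
  exact ⟨x, Finset.mem_inter.1 hx⟩

end Quorum

theorem transGen_of_le_round {V : Type*} {round : V → ℕ} {P : V → V → Prop} {B : V} {m : ℕ}
    (hbase : ∀ A, round A = m → Relation.TransGen P B A)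
    (hpred : ∀ A, m < round A → ∃ s, round s = round A - 1 ∧ P s A) :
    ∀ A, m ≤ round A → Relation.TransGen P B A := by
  suffices h : ∀ r, m ≤ r → ∀ A, round A = r → Relation.TransGen P B A from
    fun A hA ↦ h (round A) hA A rfl
  intro r hr
  induction r, hr using Nat.le_induction with
  | base => exact hbase
  | succ r hr ih =>
    intro A hA
    obtain ⟨s, hs, hsA⟩ := hpred A (by omega)
    exact (ih s (by omega)).tail hsA

theorem directly_committed_never_skipped_general {V ι : Type*} [Fintype ι]
    {author : V → ι} {round : V → ℕ} {P : V → V → Prop} {q : ℕ}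
    (huniq : ∀ a b : V, author a = author b → round a = round b → a = b)
    (hquorum : ∀ b : V, 1 ≤ round b →
      ∃ S : Finset V, q ≤ S.card ∧ ∀ s ∈ S, round s = round b - 1 ∧ P s b)
    {B : V} {W : Finset V} (hcard : Fintype.card ι < q + W.card)
    (hW : ∀ w ∈ W, round w = round B + 1 ∧ P B w) :
    ∀ A : V, round B + 2 ≤ round A → Relation.TransGen P B A := by
  have hinj : Set.InjOn author {v | round v = round B + 1} :=
    fun a ha b hb hab ↦ huniq a b hab (ha.trans hb.symm)
  have hWround : ↑W ⊆ {v | round v = round B + 1} := fun w hw ↦ (hW w hw).1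
  refine transGen_of_le_round (fun A hA ↦ ?_) (fun A hA ↦ ?_)
  · obtain ⟨S, hqS, hS⟩ := hquorum A (by omega)
    have hSround : ↑S ⊆ {v | round v = round B + 1} := fun s hs ↦
      (hS s hs).1.trans (by omega)
    obtain ⟨x, hxS, hxW⟩ := exists_mem_mem_of_injOn_of_card_lt hinj hSround hWround (by omega)
    exact .tail (.single (hW x hxW).2) (hS x hxS).2
  · obtain ⟨S, hqS, hS⟩ := hquorum A (by omega)
    have hWcard : W.card ≤ Fintype.card ι := card_le_card_fintype_of_injOn (hinj.mono hWround)
    have hq : 0 < q := by omega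
    obtain ⟨s, hs⟩ : S.Nonempty := Finset.card_pos.1 (hq.trans_le hqS)
    exact ⟨s, hS s hs⟩

/-- Lemma 2 (commit-no-skip), abstract content: if a block B of round R is
directly committed (f+1 blocks of round R+1 reference it), then every block
of round ≥ R+2 (in particular, any anchor) has a path to B. -/
theorem directly_committed_never_skipped (f : ℕ) (V : Type*)
    (author : V → Fin (2*f+1)) (round : V → ℕ) (P : V → V → Prop)
    (huniq : ∀ a b : V, author a = author b → round a = round b → a = b)
    (hback : ∀ a b : V, P a b → round a < round b)
    (hquorum : ∀ b : V, 1 ≤ round b →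
      ∃ S : Finset V, f + 1 ≤ S.card ∧ ∀ s ∈ S, round s = round b - 1 ∧ P s b)
    (B : V) (R : ℕ) (hB : round B = R)
    (W : Finset V) (hWcard : f + 1 ≤ W.card)
    (hW : ∀ w ∈ W, round w = R + 1 ∧ P B w) :
    ∀ A : V, round A ≥ R + 2 → Relation.TransGen P B A := by
  subst hB
  exact directly_committed_never_skipped_general huniq hquorum (by rw [Fintype.card_fin]; omega) hW
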